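/- Let m ≥ 2 be an integer, n = 2^{2m−1} − 1, and let β be a primitive n-th root of unity in F_{4^{2m−1}}; let m_{β^i}(x) denote the minimal polynomial of β^i over F_4. Then the cyclic code of length 2n over F_4 with generator polynomial (x−1) m_β(x)^2 m_{β^3}(x) has dimension 2n − 6m + 2 and minimum distance exactly 6. -/

import Mathlib

open Polynomial

/-- The cyclic code of length `N` over the field `F` generated by the polynomial `g`.
Codewords are identified with the representatives of degree `< N` of the elements of the
ideal generated by `g` in `F[x]/(x^N - 1)`; equivalently, a polynomial `c` of degree `< N`
is a codeword iff `c ∈ (g, x^N - 1)` as an ideal of `F[x]`. -/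
noncomputable def cyclicCode (F : Type*) [Field F] (N : ℕ) (g : Polynomial F) :
    Submodule F (Polynomial F) :=
  Polynomial.degreeLT F N ⊓
    Submodule.restrictScalars F (Ideal.span ({g, Polynomial.X ^ N - 1} : Set (Polynomial F)))

/-- The minimum distance (equivalently, the minimum Hamming weight of a nonzero codeword,
a codeword being identified with its coefficient vector) of a linear code of polynomials. -/
noncomputable def minDist {F : Type*} [Field F] (C : Submodule F (Polynomial F)) : ℕ :=
  sInf {w | ∃ c ∈ C, c ≠ 0 ∧ c.support.card = w}

/-- BCH bound. -/
lemma bch_zero {F K : Type*} [Field F] [Field K] [Algebra F K] {n : ℕ} {β : K}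
    (hβ : IsPrimitiveRoot β n) (f : F[X]) (hf : ∀ i, n ≤ i → f.coeff i = 0)
    (b t : ℕ) (hz : ∀ j < t, aeval (β ^ (b + j)) f = 0) (hw : f.support.card ≤ t) :
    f = 0 := by
  classical
  by_contra hne
  obtain ⟨i0, hi0⟩ : f.support.Nonempty := by
    rwa [Finset.nonempty_iff_ne_empty, Ne, Polynomial.support_eq_empty]
  have hlt : ∀ i ∈ f.support, i < n := by
    intro i hi
    by_contra h
    exact (mem_support_iff.1 hi) (hf i (not_lt.1 h))
  have hn0 : n ≠ 0 := by have := hlt _ hi0; omega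
  have hβ0 : β ≠ 0 := hβ.ne_zero hn0
  let p : K[X] := ∏ i ∈ f.support.erase i0, (X - C (β ^ i))
  have hpdeg : p.natDegree < t := by
    have : p.natDegree = (f.support.erase i0).card := by
      simp only [p]
      rw [Polynomial.natDegree_prod_of_monic _ _ (fun i _ => monic_X_sub_C _)]
      simp only [natDegree_X_sub_C, Finset.sum_const, smul_eq_mul, mul_one]
    rw [this, Finset.card_erase_of_mem hi0]
    have := Finset.card_pos.2 ⟨i0, hi0⟩
    omega
  have h1 : ∑ i ∈ f.support, algebraMap F K (f.coeff i) * β ^ (i * b) * p.eval (β ^ i) = 0 := by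
    have : ∀ i ∈ f.support, algebraMap F K (f.coeff i) * β ^ (i * b) * p.eval (β ^ i)
        = ∑ j ∈ Finset.range t, p.coeff j * (algebraMap F K (f.coeff i) * (β ^ (b + j)) ^ i) := by
      intro i _
      rw [Polynomial.eval_eq_sum_range' hpdeg, Finset.mul_sum]
      refine Finset.sum_congr rfl fun j _ => ?_
      ring
    rw [Finset.sum_congr rfl this, Finset.sum_comm]
    refine Finset.sum_eq_zero fun j hj => ?_
    rw [← Finset.mul_sum]
    have h2 := hz j (Finset.mem_range.1 hj)
    rw [aeval_def, eval₂_eq_sum, Polynomial.sum] at h2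
    rw [h2, mul_zero]
  rw [Finset.sum_eq_single_of_mem i0 hi0] at h1
  · have h3 : p.eval (β ^ i0) ≠ 0 := by
      simp only [p, eval_prod]
      refine Finset.prod_ne_zero_iff.2 fun i hi => ?_
      simp only [eval_sub, eval_X, eval_C]
      intro h
      have hi' := Finset.mem_erase.1 hi
      exact hi'.1 (hβ.pow_inj (hlt _ hi0) (hlt _ hi'.2) (sub_eq_zero.1 h)).symm
    have h4 : algebraMap F K (f.coeff i0) ≠ 0 := by
      simpa using mem_support_iff.1 hi0
    exact mul_ne_zero (mul_ne_zero h4 (pow_ne_zero _ hβ0)) h3 h1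
  · intro i hi hne
    have : p.eval (β ^ i) = 0 := by
      simp only [p, eval_prod]
      exact Finset.prod_eq_zero (Finset.mem_erase.2 ⟨hne, hi⟩) (by simp)
    rw [this, mul_zero]

lemma card_support_double {F : Type*} [Field F] {n : ℕ} (f : F[X])
    (hf : ∀ i, n ≤ i → f.coeff i = 0) :
    ((X ^ n - 1) * f).support.card = 2 * f.support.card := by
  classical
  have hs : ((X ^ n - 1) * f).support = f.support ∪ f.support.image (· + n) := by
    ext i
    simp only [Finset.mem_union, Finset.mem_image, mem_support_iff, sub_mul, one_mul, coeff_sub,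
      coeff_X_pow_mul']
    by_cases h : n ≤ i
    · rw [if_pos h, hf i h, sub_zero]
      constructor
      · intro h'
        exact Or.inr ⟨i - n, h', by omega⟩
      · rintro (h' | ⟨a, ha, rfl⟩)
        · exact absurd rfl h'
        · simpa using ha
    · rw [if_neg h]
      constructor
      · intro h'
        left
        simpa using h'
      · rintro (h' | ⟨a, ha, rfl⟩)
        · simpa using h'
        · omega
  rw [hs, Finset.card_union_of_disjoint, Finset.card_image_of_injective _ (add_left_injective n)]
  · ring
  · rw [Finset.disjoint_left]
    intro i hi hi'
    obtain ⟨a, ha, rfl⟩ := Finset.mem_image.1 hi'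
    exact mem_support_iff.1 hi (hf _ (by omega))

lemma card_support_mod {F : Type*} [Field F] {n : ℕ} (s f : F[X])
    (hs : ∀ i, n ≤ i → s.coeff i = 0) (hf : ∀ i, n ≤ i → f.coeff i = 0) :
    s.support.card ≤ (s + (X ^ n - 1) * f).support.card := by
  classical
  refine le_trans (Finset.card_le_card (t := (s + (X ^ n - 1) * f).support.image (· % n)) ?_)
    Finset.card_image_le
  intro i hi
  rw [mem_support_iff] at hi
  have hin : i < n := by
    by_contra h
    exact hi (hs i (not_lt.1 h))
  rw [Finset.mem_image]
  by_cases h : f.coeff i = 0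
  · refine ⟨i, ?_, Nat.mod_eq_of_lt hin⟩
    rw [mem_support_iff, coeff_add, sub_mul, one_mul, coeff_sub, coeff_X_pow_mul',
      if_neg (by omega), h]
    simpa using hi
  · refine ⟨i + n, ?_, by rw [Nat.add_mod_right, Nat.mod_eq_of_lt hin]⟩
    rw [mem_support_iff, coeff_add, sub_mul, one_mul, coeff_sub, coeff_X_pow_mul',
      if_pos (by omega), hs _ (by omega), hf (i + n) (by omega)]
    simpa using h

lemma natDegree_minpoly_primitive {F K : Type*} [Field F] [Fintype F] [Field K] [Fintype K]
    [Algebra F K] (hF : Fintype.card F = 4) (m : ℕ) (hm : 2 ≤ m)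
    (hK : Fintype.card K = 4 ^ (2 * m - 1)) (n : ℕ) (hn : n = 2 ^ (2 * m - 1) - 1)
    (γ : K) (hγ : IsPrimitiveRoot γ n) : (minpoly F γ).natDegree = 2 * m - 1 := by
  have hint : IsIntegral F γ := IsIntegral.of_finite F γ
  have hfin : Module.finrank F K = 2 * m - 1 := by
    have := Module.card_eq_pow_finrank (K := F) (V := K)
    rw [hK, hF] at this
    exact (Nat.pow_right_injective (le_refl 2 |>.trans (by norm_num : 2 ≤ 4)) this).symm
  refine le_antisymm (hfin ▸ minpoly.natDegree_le γ) ?_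
  rw [← IntermediateField.adjoin.finrank hint]
  have h2 : 2 ^ 2 ≤ 2 ^ (2 * m - 1) := Nat.pow_le_pow_right (by norm_num) (by omega)
  have hγ0 : γ ≠ 0 := hγ.ne_zero (by omega)
  let L := IntermediateField.adjoin F {γ}
  set d := Module.finrank F L with hd
  have hdpos : 0 < d := Module.finrank_pos
  have : Fintype L := Fintype.ofFinite _
  have hcard : Fintype.card L = 4 ^ d := by
    rw [Module.card_eq_pow_finrank (K := F) (V := L), hF]
  let g : L := IntermediateField.AdjoinSimple.gen F γ
  have hg : (g : K) = γ := IntermediateField.AdjoinSimple.coe_gen F γ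
  have hg0 : g ≠ 0 := by
    intro h
    rw [h] at hg
    exact hγ0 hg.symm
  have h3 : g ^ (4 ^ d - 1) = 1 := by
    rw [← hcard]; exact FiniteField.pow_card_sub_one_eq_one g hg0
  have h4 : γ ^ (4 ^ d - 1) = 1 := by
    rw [← hg, ← IntermediateField.coe_pow, h3]; rfl
  have h5 := hγ.dvd_of_pow_eq_one _ h4
  have h6 : (2 ^ (2 * m - 1) - 1).gcd (2 ^ (2 * d) - 1) = 2 ^ (2 * m - 1) - 1 := by
    rw [hn, show (4 : ℕ) ^ d = 2 ^ (2 * d) by rw [pow_mul]; norm_num] at h5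
    exact Nat.gcd_eq_left h5
  rw [Nat.pow_sub_one_gcd_pow_sub_one] at h6
  have h7 : (2 : ℕ) ^ (Nat.gcd (2 * m - 1) (2 * d)) = 2 ^ (2 * m - 1) := by
    have : 0 < (2 : ℕ) ^ (Nat.gcd (2 * m - 1) (2 * d)) := by positivity
    omega
  have h8 := Nat.pow_right_injective (le_refl 2) h7
  have h9 : 2 * m - 1 ∣ 2 * d := by
    have := Nat.gcd_dvd_right (2 * m - 1) (2 * d)
    rwa [h8] at this
  have h10 : Nat.Coprime (2 * m - 1) 2 := by
    rw [Nat.coprime_two_right]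
    exact ⟨m - 1, by omega⟩
  exact Nat.le_of_dvd hdpos (h10.dvd_of_dvd_mul_left h9)

lemma aeval_sq_zero {F K : Type*} [Field F] [Fintype F] [Field K]
    [Algebra F K] (hF : Fintype.card F = 4) (m : ℕ) (hm : 2 ≤ m)
    (n : ℕ) (hn : n = 2 ^ (2 * m - 1) - 1)
    (γ : K) (hγ : γ ^ n = 1) (p : F[X]) (hp : aeval γ p = 0) : aeval (γ ^ 2) p = 0 := by
  have key : ∀ (i : ℕ), aeval (γ ^ (4 ^ i)) p = 0 := by
    intro i
    induction i with
    | zero => simpa using hp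
    | succ i ih =>
      have h := Polynomial.aeval_algHom_apply (FiniteField.frobeniusAlgHom F K) (γ ^ 4 ^ i) p
      rw [ih, map_zero, FiniteField.coe_frobeniusAlgHom] at h
      simp only [hF, ← pow_mul, ← pow_succ] at h
      exact h
  have h1 := key m
  have h2 : (4 : ℕ) ^ m = n * 2 + 2 := by
    have e : (4 : ℕ) ^ m = 2 ^ (2 * m - 1) * 2 := by
      rw [← pow_succ, show 2 * m - 1 + 1 = 2 * m by omega, pow_mul]; norm_num
    have : 0 < 2 ^ (2 * m - 1) := by positivity
    omega
  rwa [h2, pow_add, pow_mul, hγ, one_pow, one_mul] at h1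

lemma mem_cyclicCode_iff {F : Type*} [Field F] {N : ℕ} {g : F[X]} (hg : g ∣ X ^ N - 1) (c : F[X]) :
    c ∈ cyclicCode F N g ↔ c.degree < N ∧ g ∣ c := by
  unfold cyclicCode
  rw [Submodule.mem_inf, mem_degreeLT, Submodule.restrictScalars_mem, Ideal.mem_span_pair]
  refine and_congr_right fun _ => ⟨?_, ?_⟩
  · rintro ⟨a, b, rfl⟩
    exact dvd_add (dvd_mul_left _ _) (hg.mul_left b)
  · rintro ⟨a, rfl⟩
    exact ⟨a, 0, by ring⟩

lemma finrank_cyclicCode {F : Type*} [Field F] {N : ℕ} {g : F[X]} (hg : g ∣ X ^ N - 1)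
    (hg0 : g ≠ 0) (hd : g.natDegree ≤ N) :
    Module.finrank F (cyclicCode F N g) = N - g.natDegree := by
  have hinj : Function.Injective (LinearMap.mulLeft F g) := by
    intro a b h
    exact mul_left_cancel₀ hg0 h
  have h : cyclicCode F N g = (degreeLT F (N - g.natDegree)).map (LinearMap.mulLeft F g) := by
    ext c
    rw [mem_cyclicCode_iff hg, Submodule.mem_map]
    have hdeg : ∀ a : F[X], (g * a).degree < N ↔ a ∈ degreeLT F (N - g.natDegree) := by
      intro a
      rw [mem_degreeLT]
      by_cases ha : a = 0
      · simp [ha]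
      · rw [← natDegree_lt_iff_degree_lt (mul_ne_zero hg0 ha), ← natDegree_lt_iff_degree_lt ha,
          natDegree_mul hg0 ha]
        omega
    constructor
    · rintro ⟨h1, a, rfl⟩
      exact ⟨a, (hdeg a).1 h1, rfl⟩
    · rintro ⟨a, ha, rfl⟩
      exact ⟨(hdeg a).2 ha, Dvd.intro _ rfl⟩
  rw [h, ← (Submodule.equivMapOfInjective _ hinj _).finrank_eq,
    (degreeLTEquiv F (N - g.natDegree)).finrank_eq]
  simp

/-- for `m ≥ 2`, `n = 2^{2m-1} - 1` and `β` a primitive `n`-th root of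
unity in `F_{4^{2m-1}}`, the cyclic code of length `2n` over `F_4` with generator
polynomial `(x-1) m_β(x)^2 m_{β³}(x)` has dimension `2n - 6m + 2` and minimum distance
exactly `6`. -/
theorem statement17 {F K : Type*} [Field F] [Fintype F] [Field K] [Fintype K] [Algebra F K]
    (hF : Fintype.card F = 4)
    (m : ℕ) (hm : 2 ≤ m) (hK : Fintype.card K = 4 ^ (2 * m - 1))
    (n : ℕ) (hn : n = 2 ^ (2 * m - 1) - 1)
    (β : K) (hβ : IsPrimitiveRoot β n) :
    Module.finrank F
        (cyclicCode F (2 * n)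
          ((X - 1) * (minpoly F β) ^ 2 * minpoly F (β ^ 3))) =
      2 * n - 6 * m + 2 ∧
    minDist (cyclicCode F (2 * n)
        ((X - 1) * (minpoly F β) ^ 2 * minpoly F (β ^ 3))) = 6 := by
  classical
  have hchar : CharP F 2 := by
    have : Fact (Nat.Prime 2) := ⟨Nat.prime_two⟩
    exact charP_of_card_eq_prime_pow (f := 2) (by rw [hF]; norm_num)
  have hcharK : CharP K 2 := charP_of_injective_algebraMap (algebraMap F K).injective 2
  have hpow : 4 * m ≤ 2 ^ (2 * m - 1) := by
    clear hn hK
    induction m, hm using Nat.le_induction with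
    | base => norm_num
    | succ k hk ih =>
      rw [show 2 * (k + 1) - 1 = (2 * k - 1) + 2 by omega, pow_add]
      omega
  have hn7 : 7 ≤ n := by omega
  have hnpos : 0 < n := by omega
  have : NeZero n := ⟨hnpos.ne'⟩
  have hodd : (n : F) ≠ 0 := by
    intro h
    rw [CharP.cast_eq_zero_iff F 2] at h
    have h2 : 2 ∣ 2 ^ (2 * m - 1) := dvd_pow_self 2 (by omega)
    omega
  have hβn : β ^ n = 1 := hβ.pow_eq_one
  have hcop : Nat.Coprime 3 n := by
    rw [Nat.Prime.coprime_iff_not_dvd Nat.prime_three]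
    intro h
    have h2 : 2 ^ (2 * m - 1) % 3 = 2 := by
      rw [show 2 * m - 1 = 2 * (m - 1) + 1 by omega, pow_succ, pow_mul, Nat.mul_mod, Nat.pow_mod]
      norm_num
    omega
  have hβ3 : IsPrimitiveRoot (β ^ 3) n := hβ.pow_of_coprime 3 hcop
  have hd1 := natDegree_minpoly_primitive hF m hm hK n hn β hβ
  have hd3 := natDegree_minpoly_primitive hF m hm hK n hn (β ^ 3) hβ3
  have hi1 : Irreducible (minpoly F β) := minpoly.irreducible (IsIntegral.of_finite F β)
  have hi3 : Irreducible (minpoly F (β ^ 3)) :=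
    minpoly.irreducible (IsIntegral.of_finite F (β ^ 3))
  have hi0 : Irreducible (X - 1 : F[X]) := by
    simpa using irreducible_X_sub_C (1 : F)
  have hd0 : (X - 1 : F[X]).natDegree = 1 := by
    simpa using natDegree_X_sub_C (1 : F)
  set M1 := minpoly F β with hM1
  set M3 := minpoly F (β ^ 3) with hM3
  have hz1 : aeval β M1 = 0 := minpoly.aeval F β
  have hz3 : aeval (β ^ 3) M3 = 0 := minpoly.aeval F (β ^ 3)
  have hsq : ∀ (γ : K), γ ^ n = 1 → ∀ p : F[X], aeval γ p = 0 → aeval (γ ^ 2) p = 0 :=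
    fun γ hγ p hp => aeval_sq_zero hF m hm n hn γ hγ p hp
  -- the trinomial
  obtain ⟨t, ht, hwt, htz, ht0⟩ : ∃ t : F[X], (∀ i, n ≤ i → t.coeff i = 0) ∧
      t.support.card = 3 ∧ aeval β t = 0 ∧ t ≠ 0 := by
    have h1 : (1 + β) ^ n = 1 := by
      have h0 : 1 + β ≠ 0 := by
        intro h
        have h' : β = 1 := by
          have := CharTwo.add_eq_zero.1 h
          exact this.symm
        rw [h'] at hβ
        have := hβ.unique IsPrimitiveRoot.one
        omega
      have h2 : (1 + β) ^ (n + 1) = 1 + β := by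
        have e : n + 1 = 2 ^ (2 * m - 1) := by omega
        rw [e, add_pow_char_pow, one_pow, ← e, pow_succ, hβn, one_mul]
      rw [pow_succ] at h2
      exact mul_right_cancel₀ h0 (by rw [h2, one_mul])
    obtain ⟨j, hj, hj'⟩ := hβ.eq_pow_of_pow_eq_one h1
    have hj0 : j ≠ 0 := by
      rintro rfl
      rw [pow_zero] at hj'
      have : β = 0 := by simpa using hj'.symm
      exact hβ.ne_zero (by omega) this
    have hj1 : j ≠ 1 := by
      rintro rfl
      rw [pow_one] at hj'
      have : (1 : K) = 0 := by simpa using hj'.symm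
      exact one_ne_zero this
    have hc := card_support_trinomial (R := F) (k := 0) (m := 1) (n := j) (by omega) (by omega)
      one_ne_zero one_ne_zero one_ne_zero
    have hs := support_trinomial (R := F) (k := 0) (m := 1) (n := j) (by omega) (by omega)
      one_ne_zero one_ne_zero one_ne_zero
    refine ⟨_, ?_, hc, ?_, ?_⟩
    · intro i hi
      rw [← notMem_support_iff, hs]
      simp only [Finset.mem_insert, Finset.mem_singleton]
      omega
    · simp only [map_add, map_mul, aeval_C, map_one, map_pow, aeval_X, one_mul, pow_zero, pow_one,
        hj']
      exact CharTwo.add_self_eq_zero _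
    · intro h
      rw [h] at hc
      simp at hc
  -- distinctness
  have hM13 : ¬ M1 ∣ M3 := by
    intro h
    have h' : M3 ∣ M1 := (hi1.associated_of_dvd hi3 h).symm.dvd
    have htM : M1 ∣ t := minpoly.dvd F β htz
    have ht3 : aeval (β ^ 3) t = 0 :=
      aeval_eq_zero_of_dvd_aeval_eq_zero (h'.trans htM) hz3
    refine ht0 (bch_zero hβ t ht 1 3 ?_ hwt.le)
    intro j hj
    interval_cases j
    · simpa using htz
    · exact hsq β hβn t htz
    · exact ht3
  have hX1 : ¬ (X - 1 : F[X]) ∣ M1 := by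
    intro h
    have := natDegree_eq_of_degree_eq (degree_eq_degree_of_associated (hi0.associated_of_dvd hi1 h))
    omega
  have hX3 : ¬ (X - 1 : F[X]) ∣ M3 := by
    intro h
    have := natDegree_eq_of_degree_eq (degree_eq_degree_of_associated (hi0.associated_of_dvd hi3 h))
    omega
  have hM1n : M1 ∣ X ^ n - 1 := minpoly.dvd F β (by simp [hβn])
  have hM3n : M3 ∣ X ^ n - 1 := minpoly.dvd F _ (by simp [hβ3.pow_eq_one])
  have hX1n : (X - 1 : F[X]) ∣ X ^ n - 1 := sub_one_dvd_pow_sub_one X n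
  have hprod : (X - 1) * M1 * M3 ∣ X ^ n - 1 := by
    refine IsCoprime.mul_dvd (IsCoprime.mul_left ?_ ?_) (IsCoprime.mul_dvd ?_ hX1n hM1n) hM3n
    · exact hi0.coprime_iff_not_dvd.2 hX3
    · exact hi1.coprime_iff_not_dvd.2 hM13
    · exact hi0.coprime_iff_not_dvd.2 hX1
  set g := (X - 1) * M1 ^ 2 * M3 with hg
  have hgeq : g = ((X - 1) * M1 * M3) * M1 := by rw [hg]; ring
  have hsqX : (X ^ (2 * n) - 1 : F[X]) = (X ^ n - 1) * (X ^ n - 1) := by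
    have : CharP F[X] 2 := inferInstance
    have e : (X ^ n - 1 : F[X]) ^ 2 = (X ^ n) ^ 2 - 1 ^ 2 := sub_pow_char (X ^ n) 1
    rw [← sq, e, one_pow, ← pow_mul, mul_comm]
  have hgdvd : g ∣ X ^ (2 * n) - 1 := by
    rw [hgeq, hsqX]
    exact mul_dvd_mul hprod hM1n
  have hg0 : g ≠ 0 := mul_ne_zero (mul_ne_zero hi0.ne_zero (pow_ne_zero _ hi1.ne_zero)) hi3.ne_zero
  have hgdeg : g.natDegree = 6 * m - 2 := by
    rw [hg, natDegree_mul (mul_ne_zero hi0.ne_zero (pow_ne_zero _ hi1.ne_zero)) hi3.ne_zero,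
      natDegree_mul hi0.ne_zero (pow_ne_zero _ hi1.ne_zero), natDegree_pow, hd0, hd1, hd3]
    omega
  refine ⟨?_, ?_⟩
  · rw [finrank_cyclicCode hgdvd hg0 (by omega), hgdeg]
    omega
  have hmonic : (X ^ n - 1 : F[X]).Monic := by
    simpa using monic_X_pow_sub_C (1 : F) hnpos.ne'
  have hndeg : (X ^ n - 1 : F[X]).natDegree = n := by
    simpa using natDegree_X_pow_sub_C (n := n) (r := (1 : F))
  have hmem : 6 ∈ {w | ∃ c ∈ cyclicCode F (2 * n) g, c ≠ 0 ∧ c.support.card = w} := by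
    refine ⟨(X ^ n - 1) * t, ?_, mul_ne_zero hmonic.ne_zero ht0, ?_⟩
    · rw [mem_cyclicCode_iff hgdvd]
      constructor
      · rw [← natDegree_lt_iff_degree_lt (mul_ne_zero hmonic.ne_zero ht0),
          natDegree_mul hmonic.ne_zero ht0, hndeg]
        have : t.natDegree < n := by
          by_contra h
          have := ht _ (not_lt.1 h)
          rw [coeff_natDegree, leadingCoeff_eq_zero] at this
          exact ht0 this
        omega
      · rw [hgeq]
        exact mul_dvd_mul hprod (minpoly.dvd F β htz)
    · rw [card_support_double t ht, hwt]
  refine le_antisymm (Nat.sInf_le hmem) ?_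
  refine le_csInf ⟨6, hmem⟩ ?_
  rintro w ⟨c, hc, hc0, rfl⟩
  rw [mem_cyclicCode_iff hgdvd] at hc
  obtain ⟨hcdeg, hgc⟩ := hc
  rw [← natDegree_lt_iff_degree_lt hc0] at hcdeg
  set s := c %ₘ (X ^ n - 1) with hs
  set q := c /ₘ (X ^ n - 1) with hq
  have hcs : c = s + (X ^ n - 1) * q := (modByMonic_add_div c (X ^ n - 1)).symm
  have hqdeg : ∀ i, n ≤ i → q.coeff i = 0 := by
    intro i hi
    apply coeff_eq_zero_of_natDegree_lt
    rw [hq, natDegree_divByMonic _ hmonic, hndeg]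
    omega
  have hsdeg : ∀ i, n ≤ i → s.coeff i = 0 := by
    intro i hi
    apply coeff_eq_zero_of_degree_lt
    refine (degree_modByMonic_lt c hmonic).trans_le ?_
    rw [degree_eq_natDegree hmonic.ne_zero, hndeg]
    exact_mod_cast hi
  by_cases hs0 : s = 0
  · rw [hs0, zero_add] at hcs
    have hq0 : q ≠ 0 := by
      intro h
      rw [h, mul_zero] at hcs
      exact hc0 hcs
    have hM1q : M1 ∣ q := by
      have hsep : (X ^ n - 1 : F[X]).Separable := X_pow_sub_one_separable_iff.2 hodd
      have hsf := hsep.squarefree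
      obtain ⟨r, hr⟩ := hM1n
      have hr' : ¬ M1 ∣ r := by
        rintro ⟨r', rfl⟩
        exact hi1.not_isUnit (hsf M1 ⟨r', by rw [hr]; ring⟩)
      have h2 : M1 * M1 ∣ M1 * (r * q) := by
        rw [← mul_assoc, ← hr, ← hcs]
        exact Dvd.dvd.trans ⟨(X - 1) * M3, by rw [hg]; ring⟩ hgc
      have h3 := (mul_dvd_mul_iff_left hi1.ne_zero).1 h2
      exact (hi1.prime.dvd_or_dvd h3).resolve_left hr'
    have hqz : aeval β q = 0 := aeval_eq_zero_of_dvd_aeval_eq_zero hM1q hz1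
    rw [hcs, card_support_double q hqdeg]
    by_contra hlt
    refine hq0 (bch_zero hβ q hqdeg 1 2 ?_ (by omega))
    intro j hj
    interval_cases j
    · simpa using hqz
    · exact hsq β hβn q hqz
  · have hle := card_support_mod s q hsdeg hqdeg
    rw [← hcs] at hle
    refine le_trans ?_ hle
    by_contra hlt
    have hps : (X - 1) * M1 * M3 ∣ s := by
      have h1 : (X - 1) * M1 * M3 ∣ c := Dvd.dvd.trans ⟨M1, hgeq⟩ hgc
      rw [hcs] at h1
      exact (dvd_add_left (hprod.mul_right q)).1 h1
    have hs1 : aeval β s = 0 := aeval_eq_zero_of_dvd_aeval_eq_zero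
      (Dvd.dvd.trans ⟨(X - 1) * M3, by ring⟩ hps) hz1
    have hs3 : aeval (β ^ 3) s = 0 := aeval_eq_zero_of_dvd_aeval_eq_zero
      (Dvd.dvd.trans ⟨(X - 1) * M1, by ring⟩ hps) hz3
    have hs00 : aeval (1 : K) s = 0 := aeval_eq_zero_of_dvd_aeval_eq_zero
      (Dvd.dvd.trans ⟨M1 * M3, by ring⟩ hps) (show aeval (1 : K) (X - 1 : F[X]) = 0 by simp)
    have hs2 := hsq β hβn s hs1
    have hs4 : aeval (β ^ 4) s = 0 := by
      have := hsq (β ^ 2) (by rw [← pow_mul, mul_comm, pow_mul, hβn, one_pow]) s hs2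
      rwa [← pow_mul] at this
    refine hs0 (bch_zero hβ s hsdeg 0 5 ?_ (by omega))
    intro j hj
    interval_cases j
    · simpa using hs00
    · simpa using hs1
    · simpa using hs2
    · simpa using hs3
    · simpa using hs4
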